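/- (Theorem 6.4, half-turn symmetry in the plane.) Let G be a finite simple graph with |E| = 2|V| − 4, let S = {I, −I} ⊂ O(2) (the half-turn group about the origin), and let Φ : S → Aut(G) be a homomorphism such that Φ(−I) has no fixed vertex and fixes no edge setwise. Let (G,p) be an S-symmetric framework of type Φ in ℝ² whose points p_i affinely span ℝ² and which admits no nonzero fully (S,Φ)-symmetric self-stress (this last hypothesis playing the role of the paper's '(S,Φ)-generic' assumption, as licensed by Remark 6.2). Then (G,p) has a finite flex preserving the symmetry throughout the path. -/

import Mathlib

open scoped Classical

noncomputable section

abbrev Euc (d : ℕ) : Type := EuclideanSpace ℝ (Fin d)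

/-- The subspace of points of `ℝ^d` fixed by a linear isometry (orthogonal transformation). -/
def fixedSpace {d : ℕ} (x : Euc d ≃ₗᵢ[ℝ] Euc d) : Submodule ℝ (Euc d) :=
  LinearMap.ker (x.toLinearEquiv.toLinearMap - LinearMap.id)

/-!
Symmetric configurations form a linear space `X`, invariant functions on the edges a linear space
`Y`, and the squared edge lengths are given by a quadratic map `X → Y` whose derivative at `p` is
twice the symmetric part `R : X → Y` of the rigidity matrix. If `S : Y → X` sends `ω` to the net
forces it exerts on the vertices, then `∑ i, ‖S ω i‖ ^ 2` is the pairing of `ω` with `R (S ω)`.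
So when there is no invariant self-stress, `R ∘ S` is injective, hence bijective, and `R` is
surjective. By the implicit function theorem every `u ∈ ker R` is then the velocity of a curve of
symmetric configurations with the same edge lengths, and this curve is a flex unless `u` is
infinitesimally isometric.

For a half-turn, a trace computation gives `dim X = d |V| / 2` and `dim Y = |E| / 2`, while the
symmetric infinitesimal isometries are infinitesimal rotations, so have dimension at most
`d (d - 1) / 2`. In the plane the count leaves `dim ker R = 2 > 1`.
-/

open Filter Topology Module
open scoped InnerProductSpace

section LevelSetCurves

variable {X Y : Type*} [NormedAddCommGroup X] [NormedSpace ℝ X] [CompleteSpace X]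
  [NormedAddCommGroup Y] [NormedSpace ℝ Y] [FiniteDimensional ℝ Y]
  {f : X → Y} {f' : X →L[ℝ] Y} {x₀ u : X}

lemma exists_curve_in_level_set (hf : HasStrictFDerivAt f f' x₀) (hsurj : f'.range = ⊤)
    (hu : f' u = 0) :
    ∃ c : ℝ → X, c 0 = x₀ ∧ HasStrictDerivAt c u 0 ∧ ∀ᶠ t in 𝓝 0, f (c t) = f x₀ := by
  have : CompleteSpace Y := FiniteDimensional.complete ℝ Y
  let uKer : f'.ker := ⟨u, hu⟩
  let line := ContinuousLinearMap.toSpanSingleton ℝ uKer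
  refine ⟨fun t ↦ hf.implicitFunction f f' hsurj (f x₀) (line t), ?_, ?_, ?_⟩
  · simp
  · have hI : HasStrictFDerivAt (hf.implicitFunction f f' hsurj (f x₀)) f'.ker.subtypeL
        (line 0) := by
      simpa using hf.to_implicitFunction hsurj
    simpa [line, uKer] using (hI.comp 0 line.hasStrictFDerivAt).hasStrictDerivAt
  · have hline : Tendsto (fun t ↦ (f x₀, line t)) (𝓝 0) (𝓝 (f x₀, (0 : f'.ker))) := by
      simpa using (by fun_prop : Continuous fun t ↦ (f x₀, line t)).tendsto 0
    exact hline.eventually (hf.map_implicitFunction_eq hsurj)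

lemma exists_path_in_level_set_forall_ne (hf : HasStrictFDerivAt f f' x₀) (hsurj : f'.range = ⊤)
    (hu : f' u = 0) {g : X → ℝ} {g' : X →L[ℝ] ℝ} (hg : HasFDerivAt g g' x₀) (hgu : g' u ≠ 0) :
    ∃ γ : ℝ → X, ContinuousOn γ (Set.Icc 0 1) ∧ γ 0 = x₀ ∧
      (∀ t ∈ Set.Icc (0 : ℝ) 1, f (γ t) = f x₀) ∧ ∀ t ∈ Set.Ioc (0 : ℝ) 1, g (γ t) ≠ g x₀ := by
  obtain ⟨c, rfl, hc, hfc⟩ := exists_curve_in_level_set hf hsurj hu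
  have hgc : ∀ᶠ t in 𝓝 0, t ≠ 0 → g (c t) ≠ g (c 0) :=
    eventually_nhdsWithin_iff.1 ((hg.comp_hasDerivAt 0 hc.hasDerivAt).eventually_ne hgu)
  obtain ⟨_, s, hs, hlip⟩ := hc.hasStrictFDerivAt.exists_lipschitzOnWith
  obtain ⟨ε, hε, hball⟩ := Metric.eventually_nhds_iff.1 (hfc.and (hgc.and hs))
  have hmem : ∀ t ∈ Set.Icc (0 : ℝ) 1, dist (ε / 2 * t) 0 < ε := by
    rintro t ⟨ht₀, ht₁⟩
    rw [Real.dist_eq, sub_zero, abs_of_nonneg (by positivity)]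
    nlinarith
  refine ⟨fun t ↦ c (ε / 2 * t), ?_, by simp, fun t ht ↦ (hball (hmem t ht)).1, fun t ht ↦ ?_⟩
  · exact hlip.continuousOn.comp (by fun_prop) fun t ht ↦ (hball (hmem t ht)).2.2
  · exact (hball (hmem t (Set.Ioc_subset_Icc_self ht))).2.1 (mul_pos (half_pos hε) ht.1).ne'

end LevelSetCurves

lemma hasStrictFDerivAt_apply_self {X Y : Type*} [NormedAddCommGroup X] [NormedSpace ℝ X]
    [NormedAddCommGroup Y] [NormedSpace ℝ Y] (B : X →L[ℝ] X →L[ℝ] Y)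
    (hB : ∀ v w, B v w = B w v) (x : X) :
    HasStrictFDerivAt (fun v ↦ B v v) ((2 : ℝ) • B x) x := by
  refine (B.hasStrictFDerivAt_of_bilinear (hasStrictFDerivAt_id x)
    (hasStrictFDerivAt_id x)).congr_fderiv ?_
  ext w
  simp [two_smul, hB w x]

section EquivariantMaps

variable {K M ι : Type*}

/-- The space of maps `v : ι → M` intertwining `τ : ι → ι` with the linear map `C`. It serves both
for symmetric configurations of points (`ι` the vertices, `C` an isometry) and for invariant
functions on the edges (`M` the scalars, `C` the identity). -/
def equivariantMaps [Semiring K] [AddCommMonoid M] [Module K M] (C : M →ₗ[K] M) (τ : ι → ι) :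
    Submodule K (ι → M) where
  carrier := {v | ∀ i, C (v i) = v (τ i)}
  add_mem' hv hw i := by simp [hv i, hw i]
  zero_mem' i := by simp
  smul_mem' a v hv i := by simp [hv i]

variable [Field K] [AddCommGroup M] [Module K M] [FiniteDimensional K M] {τ : ι → ι}

lemma trace_compLeft_comp_funLeft_eq_zero [Finite ι] (C : M →ₗ[K] M) (hfree : ∀ i, τ i ≠ i) :
    LinearMap.trace K (ι → M) (C.compLeft ι ∘ₗ LinearMap.funLeft K M τ) = 0 := by
  cases nonempty_fintype ι
  rw [LinearMap.trace_eq_matrix_trace K (Pi.basis fun _ ↦ finBasis K M)]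
  refine Finset.sum_eq_zero fun ⟨i, k⟩ _ ↦ ?_
  simp [LinearMap.toMatrix_apply, LinearMap.funLeft_apply, hfree i]

lemma two_mul_finrank_equivariantMaps [CharZero K] [Fintype ι] {C : M →ₗ[K] M}
    (hC : Function.Involutive C) (hτ : Function.Involutive τ) (hfree : ∀ i, τ i ≠ i) :
    2 * finrank K (equivariantMaps C τ) = Fintype.card ι * finrank K M := by
  let T : (ι → M) →ₗ[K] (ι → M) := C.compLeft ι ∘ₗ LinearMap.funLeft K M τ
  have hT (v i) : T v i = C (v (τ i)) := rfl
  have hproj : LinearMap.IsProj (equivariantMaps C τ) ((2⁻¹ : K) • (LinearMap.id + T)) := by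
    refine ⟨fun v i ↦ ?_, fun v hv ↦ funext fun i ↦ ?_⟩
    · simp [hT, hC _, hτ _, add_comm]
    · have hvi : C (v (τ i)) = v i := by rw [hv, hτ]
      simp [hT, hvi, ← add_smul, ← two_mul]
  have htrace := hproj.trace
  rw [map_smul, map_add, trace_compLeft_comp_funLeft_eq_zero C hfree, LinearMap.trace_id,
    finrank_pi_fintype, smul_eq_mul, add_zero, inv_mul_eq_iff_eq_mul₀ two_ne_zero] at htrace
  simpa using (mod_cast htrace.symm :
    2 * finrank K (equivariantMaps C τ) = ∑ _ : ι, finrank K M)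

end EquivariantMaps

section Frameworks

variable {V E : Type*} [NormedAddCommGroup E] [InnerProductSpace ℝ E]

/-- The symmetric bilinear form polarizing the squared length `‖v i - v j‖ ^ 2` of each pair
`s(i, j)`. For a fixed first argument `p`, its values on edges give the rigidity matrix of the
framework with points `p`. -/
def edgeForm : (V → E) →ₗ[ℝ] (V → E) →ₗ[ℝ] (Sym2 V → ℝ) :=
  LinearMap.mk₂ ℝ
    (fun v w ↦ Sym2.lift ⟨fun i j ↦ ⟪v i - v j, w i - w j⟫_ℝ, fun i j ↦ by
      simp only [← inner_neg_neg (v i - v j), neg_sub]⟩)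
    (fun v v' w ↦ funext <| Sym2.ind fun i j ↦ by simp [add_sub_add_comm, inner_add_left])
    (fun a v w ↦ funext <| Sym2.ind fun i j ↦ by simp [← smul_sub, inner_smul_left])
    (fun v w w' ↦ funext <| Sym2.ind fun i j ↦ by simp [add_sub_add_comm, inner_add_right])
    (fun a v w ↦ funext <| Sym2.ind fun i j ↦ by simp [← smul_sub, inner_smul_right])

lemma edgeForm_mk (v w : V → E) (i j : V) :
    edgeForm v w s(i, j) = ⟪v i - v j, w i - w j⟫_ℝ := rfl

lemma edgeForm_comm (v w : V → E) : edgeForm v w = edgeForm w v :=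
  funext <| Sym2.ind fun _ _ ↦ real_inner_comm _ _

lemma edgeForm_self_eq_iff {v w : V → E} {i j : V} :
    edgeForm v v s(i, j) = edgeForm w w s(i, j) ↔ ‖v i - v j‖ = ‖w i - w j‖ := by
  rw [edgeForm_mk, edgeForm_mk, real_inner_self_eq_norm_sq, real_inner_self_eq_norm_sq,
    sq_eq_sq₀ (norm_nonneg _) (norm_nonneg _)]

lemma edgeForm_map_of_mem_equivariantMaps {C : E →ₗᵢ[ℝ] E} {τ : V → V} {v w : V → E}
    (hv : v ∈ equivariantMaps C.toLinearMap τ) (hw : w ∈ equivariantMaps C.toLinearMap τ)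
    (e : Sym2 V) : edgeForm v w (e.map τ) = edgeForm v w e := by
  induction e using Sym2.ind with
  | _ i j =>
    simp only [Sym2.map_mk, edgeForm_mk, ← hv _, ← hw _, ← map_sub]
    exact C.inner_map_map _ _

/-- The infinitesimally isometric motions of the configuration `p`: velocities that change no
distance between two points to first order. -/
def infinitesimalIsometries (p : V → E) : Submodule ℝ (V → E) :=
  LinearMap.ker (edgeForm p)

lemma mem_infinitesimalIsometries {p w : V → E} :
    w ∈ infinitesimalIsometries p ↔ ∀ i j, edgeForm p w s(i, j) = 0 :=
  funext_iff.trans Sym2.forall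

variable {G : SimpleGraph V}

/-- The framework `(G, p)` has a finite flex along which `C` keeps inducing the permutation `τ` of
the points. -/
def HasSymmetricFlex (G : SimpleGraph V) (C : E →ₗᵢ[ℝ] E) (τ : V → V) (p : V → E) : Prop :=
  ∃ P : ℝ → V → E,
    ContinuousOn P (Set.Icc 0 1) ∧
    P 0 = p ∧
    (∀ t ∈ Set.Icc (0 : ℝ) 1, ∀ i j, G.Adj i j → ‖P t i - P t j‖ = ‖p i - p j‖) ∧
    (∃ k l, ∀ t ∈ Set.Ioc (0 : ℝ) 1, ‖P t k - P t l‖ ≠ ‖p k - p l‖) ∧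
    ∀ t ∈ Set.Icc (0 : ℝ) 1, ∀ i, C (P t i) = P t (τ i)

/-- The form `edgeForm`, read as a map from pairs of symmetric configurations to invariant functions
on the edges. -/
def symmetricEdgeForm (C : E →ₗᵢ[ℝ] E) (φ : G ≃g G) :
    equivariantMaps C.toLinearMap φ →ₗ[ℝ] equivariantMaps C.toLinearMap φ →ₗ[ℝ]
      equivariantMaps (LinearMap.id : ℝ →ₗ[ℝ] ℝ) φ.mapEdgeSet :=
  LinearMap.mk₂ ℝ
    (fun v w ↦ ⟨fun e ↦ edgeForm v.1 w.1 e.1,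
      fun e ↦ (edgeForm_map_of_mem_equivariantMaps v.2 w.2 e.1).symm⟩)
    (fun v v' w ↦ by ext; simp) (fun a v w ↦ by ext; simp)
    (fun v w w' ↦ by ext; simp) (fun a v w ↦ by ext; simp)

variable {C : E →ₗᵢ[ℝ] E} {φ : G ≃g G}

lemma symmetricEdgeForm_comm (v w : equivariantMaps C.toLinearMap φ) :
    symmetricEdgeForm C φ v w = symmetricEdgeForm C φ w v :=
  Subtype.ext <| funext fun e ↦ congrFun (edgeForm_comm v.1 w.1) e.1

lemma hasSymmetricFlex_of_velocity [Finite V] [FiniteDimensional ℝ E]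
    (p u : equivariantMaps C.toLinearMap φ)
    (hsurj : Function.Surjective (symmetricEdgeForm C φ p)) (hu : symmetricEdgeForm C φ p u = 0)
    (hmove : u.1 ∉ infinitesimalIsometries p.1) :
    HasSymmetricFlex G C φ p.1 := by
  cases nonempty_fintype V
  obtain ⟨k, l, hkl⟩ : ∃ k l, edgeForm p.1 u.1 s(k, l) ≠ 0 := by
    simpa only [mem_infinitesimalIsometries, not_forall] using hmove
  let X := equivariantMaps C.toLinearMap φ
  let B := (symmetricEdgeForm C φ).toContinuousBilinearMap
  let D := ((edgeForm.compr₂ (LinearMap.proj s(k, l))).domRestrict₁₂ X X).toContinuousBilinearMap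
  have hf := hasStrictFDerivAt_apply_self B symmetricEdgeForm_comm p
  have hg := hasStrictFDerivAt_apply_self D
    (fun v w ↦ congrFun (edgeForm_comm v.1 w.1) s(k, l)) p
  have hDu : D p u ≠ 0 := hkl
  have hrange : ((2 : ℝ) • B p).range = ⊤ := by
    refine LinearMap.range_eq_top.2 fun y ↦ ?_
    obtain ⟨x, hx⟩ := hsurj ((2 : ℝ)⁻¹ • y)
    exact ⟨x, (congrArg ((2 : ℝ) • ·) hx).trans (smul_inv_smul₀ two_ne_zero y)⟩
  obtain ⟨γ, hγ, rfl, hlevel, hne⟩ := exists_path_in_level_set_forall_ne hf hrange (u := u)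
    (by simp [B, hu]) hg.hasFDerivAt (by simpa using hDu)
  refine ⟨fun t ↦ (γ t).1, continuous_subtype_val.comp_continuousOn hγ, rfl, ?_,
    ⟨k, l, fun t ht h ↦ hne t ht (edgeForm_self_eq_iff.2 h)⟩, fun t _ ↦ (γ t).2⟩
  intro t ht i j hij
  exact edgeForm_self_eq_iff.1 (congrFun (congrArg Subtype.val (hlevel t ht)) ⟨s(i, j), hij⟩)

variable [Fintype V] [DecidableRel G.Adj]

variable (G) in
/-- The net forces at the vertices exerted by the stress `ω` on the framework `(G, p)`. Only the
values of `ω` on edges matter; `ω` is a self-stress when all net forces vanish. -/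
def netForce (p : V → E) : (Sym2 V → ℝ) →ₗ[ℝ] (V → E) :=
  LinearMap.pi fun i ↦ ∑ j ∈ G.neighborFinset i, (LinearMap.proj s(i, j)).smulRight (p i - p j)

lemma netForce_apply (p : V → E) (ω : Sym2 V → ℝ) (i : V) :
    netForce G p ω i = ∑ j ∈ G.neighborFinset i, ω s(i, j) • (p i - p j) := by
  simp [netForce]

lemma sum_netForce_inner (p w : V → E) (ω : Sym2 V → ℝ) :
    2 * ∑ i, ⟪netForce G p ω i, w i⟫_ℝ =
      ∑ i, ∑ j ∈ G.neighborFinset i, ω s(i, j) * edgeForm p w s(i, j) := by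
  let a (i j : V) : ℝ := if G.Adj i j then ω s(i, j) * ⟪p i - p j, w i⟫_ℝ else 0
  have hforce : ∑ i, ⟪netForce G p ω i, w i⟫_ℝ = ∑ i, ∑ j, a i j := by
    refine Finset.sum_congr rfl fun i _ ↦ ?_
    simp only [netForce_apply, sum_inner, real_inner_smul_left]
    simp only [a, G.neighborFinset_eq_filter, Finset.sum_filter]
  have hedge (i j : V) :
      (if G.Adj i j then ω s(i, j) * edgeForm p w s(i, j) else 0) = a i j + a j i := by
    simp only [a, G.adj_comm j i, Sym2.eq_swap (a := j), edgeForm_mk]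
    split_ifs
    · rw [inner_sub_right, ← neg_sub (p i) (p j), inner_neg_left]
      ring
    · simp
  simp only [G.neighborFinset_eq_filter, Finset.sum_filter, hedge, Finset.sum_add_distrib]
  rw [hforce, Finset.sum_comm (f := fun i j ↦ a j i), two_mul]

lemma netForce_mem_equivariantMaps {p : V → E}
    (hp : p ∈ equivariantMaps C.toLinearMap φ) {ω : Sym2 V → ℝ}
    (hω : ∀ e ∈ G.edgeSet, ω (e.map φ) = ω e) :
    netForce G p ω ∈ equivariantMaps C.toLinearMap φ := by
  intro i
  rw [netForce_apply, netForce_apply, map_sum]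
  refine Finset.sum_equiv φ.toEquiv (fun j ↦ by simp [φ.map_adj_iff]) fun j hj ↦ ?_
  have hωij : ω s(φ i, φ j) = ω s(i, j) := hω s(i, j) (by simpa using hj)
  rw [map_smul, map_sub, hp, hp]
  simp [hωij]

/-- The framework `(G, p)` has no nonzero self-stress that is invariant under `τ`. -/
def NoInvariantStress (G : SimpleGraph V) [DecidableRel G.Adj] (τ : V → V) (p : V → E) : Prop :=
  ∀ ω : Sym2 V → ℝ,
    (∀ i, ∑ j ∈ G.neighborFinset i, ω s(i, j) • (p i - p j) = 0) →
    (∀ e ∈ G.edgeSet, ω (e.map τ) = ω e) → ∀ e ∈ G.edgeSet, ω e = 0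

lemma surjective_symmetricEdgeForm (p : equivariantMaps C.toLinearMap φ)
    (hstress : NoInvariantStress G φ p.1) :
    Function.Surjective (symmetricEdgeForm C φ p) := by
  let Y := equivariantMaps (LinearMap.id : ℝ →ₗ[ℝ] ℝ) φ.mapEdgeSet
  let ext₀ : Y →ₗ[ℝ] Sym2 V → ℝ := Function.ExtendByZero.linearMap ℝ Subtype.val ∘ₗ Y.subtype
  have hext (ω : Y) (e : G.edgeSet) : ext₀ ω e.1 = ω.1 e :=
    Subtype.val_injective.extend_apply _ _ _
  have hinv (ω : Y) : ∀ e ∈ G.edgeSet, ext₀ ω (e.map φ) = ext₀ ω e := fun e he ↦ by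
    rw [hext ω ⟨e, he⟩]
    exact (hext ω (φ.mapEdgeSet ⟨e, he⟩)).trans (ω.2 ⟨e, he⟩).symm
  let S : Y →ₗ[ℝ] equivariantMaps C.toLinearMap φ :=
    (netForce G p.1 ∘ₗ ext₀).codRestrict _ fun ω ↦ netForce_mem_equivariantMaps p.2 (hinv ω)
  suffices hinj : Function.Injective (symmetricEdgeForm C φ p ∘ₗ S) from
    (LinearMap.injective_iff_surjective.1 hinj).of_comp (g := S)
  refine (injective_iff_map_eq_zero _).2 fun ω hω ↦ ?_
  have hzero {i j : V} (hij : G.Adj i j) : edgeForm p.1 (S ω).1 s(i, j) = 0 :=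
    congrFun (congrArg Subtype.val hω) ⟨s(i, j), hij⟩
  have hnorm : ∑ i, ⟪(S ω).1 i, (S ω).1 i⟫_ℝ = 0 := by
    refine (mul_eq_zero_iff_left (two_ne_zero (α := ℝ))).1
      ((sum_netForce_inner (G := G) p.1 (S ω).1 (ext₀ ω)).trans ?_)
    refine Finset.sum_eq_zero fun i _ ↦ Finset.sum_eq_zero fun j hj ↦ ?_
    rw [hzero (by simpa using hj), mul_zero]
  have hforce (i : V) : netForce G p.1 (ext₀ ω) i = 0 :=
    inner_self_eq_zero.1
      ((Finset.sum_eq_zero_iff_of_nonneg fun _ _ ↦ real_inner_self_nonneg).1 hnorm i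
        (Finset.mem_univ i))
  refine Subtype.ext <| funext fun e ↦ ?_
  rw [← hext]
  exact hstress _ (fun i ↦ (netForce_apply p.1 _ i).symm.trans (hforce i)) (hinv ω) e.1 e.2

theorem hasSymmetricFlex_of_finrank_lt [FiniteDimensional ℝ E] {p : V → E}
    (hp : p ∈ equivariantMaps C.toLinearMap φ) (hstress : NoInvariantStress G φ p)
    (hdim : finrank ℝ (equivariantMaps (LinearMap.id : ℝ →ₗ[ℝ] ℝ) φ.mapEdgeSet) +
        finrank ℝ ↥(equivariantMaps C.toLinearMap φ ⊓ infinitesimalIsometries p) <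
      finrank ℝ (equivariantMaps C.toLinearMap φ)) :
    HasSymmetricFlex G C φ p := by
  let R := symmetricEdgeForm C φ ⟨p, hp⟩
  have hsurj : Function.Surjective R := surjective_symmetricEdgeForm ⟨p, hp⟩ hstress
  obtain ⟨u, hu, hmove⟩ : ∃ u, R u = 0 ∧ u.1 ∉ infinitesimalIsometries p := by
    by_contra! hker
    have hle : R.ker.map (Submodule.subtype _) ≤
        equivariantMaps C.toLinearMap φ ⊓ infinitesimalIsometries p := by
      rintro _ ⟨u, hu, rfl⟩
      exact ⟨u.2, hker u hu⟩
    have hker_le := Submodule.finrank_mono hle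
    have hrank := R.finrank_range_add_finrank_ker
    rw [Submodule.finrank_map_subtype_eq] at hker_le
    rw [LinearMap.range_eq_top.2 hsurj, finrank_top] at hrank
    omega
  exact hasSymmetricFlex_of_velocity ⟨p, hp⟩ u hsurj hu hmove

end Frameworks

section HalfTurn

variable {V E : Type*} [NormedAddCommGroup E] [InnerProductSpace ℝ E]

lemma eq_zero_of_forall_inner_eq_zero {ι : Type*} {b : ι → E}
    (hb : Submodule.span ℝ (Set.range b) = ⊤) {x : E} (hx : ∀ i, ⟪b i, x⟫_ℝ = 0) : x = 0 := by
  have hle : Submodule.span ℝ (Set.range b) ≤ (ℝ ∙ x)ᗮ := by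
    rw [Submodule.span_le]
    rintro _ ⟨i, rfl⟩
    exact Submodule.mem_orthogonal_singleton_iff_inner_left.2 (hx i)
  exact inner_self_eq_zero.1 <| Submodule.mem_orthogonal_singleton_iff_inner_left.1 <|
    hle (hb ▸ Submodule.mem_top)

variable {τ : V → V} {p w : V → E}

lemma inner_eq_neg_inner_of_mem_infinitesimalIsometries (hp : ∀ i, p (τ i) = -p i)
    (hw : ∀ i, w (τ i) = -w i) (hiso : w ∈ infinitesimalIsometries p) (i j : V) :
    ⟪p i, w j⟫_ℝ = -⟪p j, w i⟫_ℝ := by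
  have hform := mem_infinitesimalIsometries.1 hiso
  have hself (i : V) : ⟪p i, w i⟫_ℝ = 0 := by
    have h := hform i (τ i)
    simp only [edgeForm_mk, hp, hw, inner_sub_left, inner_sub_right, inner_neg_left,
      inner_neg_right] at h
    linarith
  have h := hform i j
  simp only [edgeForm_mk, inner_sub_left, inner_sub_right, hself] at h
  linarith

lemma eq_zero_of_inner_eq_neg_inner {n : ℕ} {b : Fin n → V}
    (hb : Submodule.span ℝ (Set.range (p ∘ b)) = ⊤)
    (hskew : ∀ i j, ⟪p i, w j⟫_ℝ = -⟪p j, w i⟫_ℝ)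
    (hupper : ∀ i j, i < j → ⟪p (b i), w (b j)⟫_ℝ = 0) : w = 0 := by
  have hentries (i j : Fin n) : ⟪p (b i), w (b j)⟫_ℝ = 0 := by
    rcases lt_trichotomy i j with hij | rfl | hij
    · exact hupper i j hij
    · exact self_eq_neg.1 (hskew _ _)
    · rw [hskew, hupper j i hij, neg_zero]
  have hbasis (j : Fin n) : w (b j) = 0 :=
    eq_zero_of_forall_inner_eq_zero hb fun i ↦ hentries i j
  refine funext fun m ↦ eq_zero_of_forall_inner_eq_zero hb fun i ↦ ?_
  rw [Function.comp_apply, hskew, hbasis, inner_zero_right, neg_zero]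

lemma finrank_equivariantMaps_inf_infinitesimalIsometries_le [FiniteDimensional ℝ E]
    {C : E →ₗ[ℝ] E} (hC : ∀ x, C x = -x) (hp : p ∈ equivariantMaps C τ)
    (hspan : Submodule.span ℝ (Set.range p) = ⊤) :
    finrank ℝ ↥(equivariantMaps C τ ⊓ infinitesimalIsometries p) ≤ (finrank ℝ E).choose 2 := by
  obtain ⟨q, hq, hqspan, -⟩ := Submodule.exists_fun_fin_finrank_span_eq ℝ (Set.range p)
  choose b hb using hq
  obtain rfl : p ∘ b = q := funext hb
  let n := finrank ℝ (Submodule.span ℝ (Set.range p))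
  let upper :
      ↥(equivariantMaps C τ ⊓ infinitesimalIsometries p) →ₗ[ℝ] ((Σ j : Fin n, Fin j) → ℝ) :=
    LinearMap.pi fun ⟨j, i⟩ ↦ innerₗ E (p (b (i.castLE j.2.le))) ∘ₗ LinearMap.proj (b j) ∘ₗ
      Submodule.subtype _
  have hinj : Function.Injective upper := by
    refine (injective_iff_map_eq_zero _).2 fun w hw ↦ Subtype.ext ?_
    refine eq_zero_of_inner_eq_neg_inner (hqspan.trans hspan)
      (inner_eq_neg_inner_of_mem_infinitesimalIsometries (τ := τ) (fun i ↦ by rw [← hp, hC])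
        (fun i ↦ by rw [← w.2.1, hC]) w.2.2) fun i j hij ↦ ?_
    exact congrFun hw ⟨j, ⟨i, hij⟩⟩
  have hcard : Fintype.card (Σ j : Fin n, Fin j) = (finrank ℝ E).choose 2 := by
    have hn : n = finrank ℝ E := by rw [← finrank_top ℝ E, ← hspan]
    rw [Fintype.card_sigma, ← hn, Nat.choose_two_right, ← Finset.sum_range_id]
    simp [Fin.sum_univ_eq_sum_range (fun j ↦ j)]
  rw [← hcard, ← finrank_fintype_fun_eq_card ℝ]
  exact LinearMap.finrank_le_finrank_of_injective hinj

theorem stmt_4_general [Fintype V] [FiniteDimensional ℝ E] {G : SimpleGraph V}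
    [DecidableRel G.Adj] [Fintype G.edgeSet]
    (hcount : G.edgeFinset.card + 2 * (finrank ℝ E).choose 2 < Fintype.card V * finrank ℝ E)
    {C : E →ₗᵢ[ℝ] E} (hC : ∀ x, C x = -x) {φ : G ≃g G} (hφ : Function.Involutive φ)
    (hfreeV : ∀ i, φ i ≠ i) (hfreeE : ∀ e ∈ G.edgeSet, Sym2.map φ e ≠ e)
    (hsym : ∀ i, C (p i) = p (φ i)) (hspan : Submodule.span ℝ (Set.range p) = ⊤)
    (hstress : NoInvariantStress G φ p) :
    HasSymmetricFlex G C φ p := by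
  have hφE : Function.Involutive φ.mapEdgeSet := fun e ↦ Subtype.ext <| by
    change Sym2.map φ (Sym2.map φ e.1) = e.1
    rw [Sym2.map_map, hφ.comp_self, Sym2.map_id, id]
  have hdimX := two_mul_finrank_equivariantMaps (C := C.toLinearMap)
    (fun x ↦ by simp [hC]) hφ hfreeV
  have hdimY := two_mul_finrank_equivariantMaps (C := (LinearMap.id : ℝ →ₗ[ℝ] ℝ))
    (fun _ ↦ rfl) hφE fun e he ↦ hfreeE e.1 e.2 (congrArg Subtype.val he)
  have hdimIso := finrank_equivariantMaps_inf_infinitesimalIsometries_le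
    (C := C.toLinearMap) hC hsym hspan
  rw [finrank_self, mul_one, ← SimpleGraph.edgeFinset_card] at hdimY
  exact hasSymmetricFlex_of_finrank_lt hsym hstress (by omega)

end HalfTurn

/-- Theorem 6.4, half-turn symmetry in the plane:
`S = {I, -I} ⊂ O(2)`, `Φ(-I) = σ` has no fixed vertex and fixes no edge,
`|E| = 2|V| - 4`; then a symmetric framework `(G,p)` which spans the plane and
has no nonzero fully symmetric self-stress has a symmetry-preserving finite
flex. -/
theorem stmt_4 {V : Type*} [Fintype V] [DecidableEq V]
    (G : SimpleGraph V) [DecidableRel G.Adj]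
    (hcount : G.edgeFinset.card + 4 = 2 * Fintype.card V)
    (C : Euc 2 ≃ₗᵢ[ℝ] Euc 2) (hC : ∀ v, C v = -v)
    (σ : Equiv.Perm V) (hσ2 : σ * σ = 1)
    (hσadj : ∀ i j : V, G.Adj (σ i) (σ j) ↔ G.Adj i j)
    (hnofixv : ∀ i : V, σ i ≠ i)
    (hnofixe : ∀ e ∈ G.edgeSet, Sym2.map σ e ≠ e)
    (p : V → Euc 2) (hp : Function.Injective p)
    (hsym : ∀ i, C (p i) = p (σ i))
    (hspan : affineSpan ℝ (Set.range p) = ⊤)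
    (hnostress : ∀ ω : Sym2 V → ℝ,
      (∀ i : V, ∑ j ∈ G.neighborFinset i, ω s(i, j) • (p i - p j) = 0) →
      (∀ e ∈ G.edgeSet, ω (Sym2.map σ e) = ω e) →
      ∀ e ∈ G.edgeSet, ω e = 0) :
    ∃ P : ℝ → V → Euc 2,
      ContinuousOn P (Set.Icc 0 1) ∧
      P 0 = p ∧
      (∀ t ∈ Set.Icc (0:ℝ) 1, ∀ i j : V, G.Adj i j → ‖P t i - P t j‖ = ‖p i - p j‖) ∧
      (∃ k l : V, ∀ t ∈ Set.Ioc (0:ℝ) 1, ‖P t k - P t l‖ ≠ ‖p k - p l‖) ∧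
      (∀ t ∈ Set.Icc (0:ℝ) 1, ∀ i, C (P t i) = P t (σ i)) := by
  have hcount' : G.edgeFinset.card + 2 * (finrank ℝ (Euc 2)).choose 2 <
      Fintype.card V * finrank ℝ (Euc 2) := by
    rw [finrank_euclideanSpace_fin, Nat.choose_self]
    omega
  exact stmt_4_general hcount' (C := C.toLinearIsometry) hC (φ := ⟨σ, hσadj _ _⟩)
    (fun i ↦ Equiv.congr_fun hσ2 i) hnofixv hnofixe hsym
    (Submodule.eq_top_iff'.2 fun x ↦ affineSpan_subset_span (hspan ▸ AffineSubspace.mem_top ℝ _ x))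
    hnostress
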